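/- arXiv:2001.09317 — 3 statements merged into one kernel-verified Lean document; each statement's English description precedes it below -/
import Mathlib

section
/- (Equation (11) in the proof of Lemma 4 of the paper.) With μ_I and μ_II the Case I and Case II schedules built from integers k ≥ 0, k1 ≥ 0, k2 ≥ 1 and a common schedule ν, and T = k + k1 + k2 + 1: for every integer m with k1+1 ≤ m ≤ k1+k2, A_{μ_I}(T−m) − A_{μ_II}(T−m) = (1−μ_min)^{k1+k2−m} · (μ_min − μ*) · A_ν(k), where A_ν(k) = ∑_{τ=0}^∞ ∏_{i=0}^{τ-1} (1 − ν(k−i)) is the expected AoI at slot k under the common prefix schedule ν. -/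
/-- The expected Age-of-Information at time-slot `t` under a per-slot
success-probability function `μ : ℤ → ℝ`: the series
`A_μ(t) = ∑_{τ=0}^∞ ∏_{i=0}^{τ-1} (1 − μ(t−i))`, where the `τ = 0` term
(the empty product) equals 1. -/
noncomputable def aoi (μ : ℤ → ℝ) (t : ℤ) : ℝ :=
  ∑' τ : ℕ, ∏ i ∈ Finset.range τ, (1 - μ (t - (i : ℤ)))

/-- Case I schedule: `ν(s)` for `s ≤ k`; `μ*` in slot `k+1`; the worst channel
`μ_min` in slots `k+2` to `k+k2+1`; the optimal channel `μ*` thereafter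
(in particular in slots `k+k2+2` to `T = k+k1+k2+1`). -/
noncomputable def caseI (μmin μstar : ℝ) (ν : ℤ → ℝ) (k k2 : ℕ) : ℤ → ℝ :=
  fun s =>
    if s ≤ (k : ℤ) then ν s
    else if s = (k : ℤ) + 1 then μstar
    else if s ≤ (k : ℤ) + (k2 : ℤ) + 1 then μmin
    else μstar

/-- Case II schedule: `ν(s)` for `s ≤ k`; the worst channel `μ_min` in slots
`k+1` to `k+k2`; the optimal channel `μ*` thereafter
(in particular in slots `k+k2+1` to `T = k+k1+k2+1`). -/
noncomputable def caseII (μmin μstar : ℝ) (ν : ℤ → ℝ) (k k2 : ℕ) : ℤ → ℝ :=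
  fun s =>
    if s ≤ (k : ℤ) then ν s
    else if s ≤ (k : ℤ) + (k2 : ℤ) then μmin
    else μstar

/-! If the channels agree after some slot, the recursion `A(t+1) = 1 + (1 - μ(t+1)) A(t)` makes the
difference of two expected ages scale by `1 - μ(s)` in each later slot `s`. Cases I and II first
differ in slot `k + 1`, where the common age `A_ν(k)` is multiplied by `1 - μ*` and by `1 - μ_min`
respectively, and then they share the channel `μ_min` up to slot `k + k2`. -/

/-- The probability that the last `τ` slots up to `t` all fail, i.e. that the age at `t` exceeds
`τ`; the summand of `aoi μ t`. -/
noncomputable def ageTail (μ : ℤ → ℝ) (t : ℤ) (τ : ℕ) : ℝ :=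
  ∏ i ∈ Finset.range τ, (1 - μ (t - (i : ℤ)))

section AgeOfInformation

variable {μ μ' : ℤ → ℝ} {t : ℤ}

theorem ageTail_zero (μ : ℤ → ℝ) (t : ℤ) : ageTail μ t 0 = 1 :=
  Finset.prod_range_zero _

theorem ageTail_add_one_succ (μ : ℤ → ℝ) (t : ℤ) (τ : ℕ) :
    ageTail μ (t + 1) (τ + 1) = (1 - μ (t + 1)) * ageTail μ t τ := by
  simp only [ageTail, Finset.prod_range_succ', Nat.cast_add, Nat.cast_one, Nat.cast_zero,
    add_sub_add_right_eq_sub, sub_zero, mul_comm]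

theorem ageTail_congr (h : ∀ s ≤ t, μ s = μ' s) : ageTail μ t = ageTail μ' t :=
  funext fun _ => Finset.prod_congr rfl fun i _ => by rw [h (t - i) (by omega)]

theorem aoi_congr (h : ∀ s ≤ t, μ s = μ' s) : aoi μ t = aoi μ' t :=
  congrArg tsum (ageTail_congr h)

theorem abs_ageTail_le_pow {r : ℝ} (h : ∀ s ≤ t, |1 - μ s| ≤ r) (τ : ℕ) :
    |ageTail μ t τ| ≤ r ^ τ := by
  rw [ageTail, Finset.abs_prod]
  calc ∏ i ∈ Finset.range τ, |1 - μ (t - i)|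
      ≤ ∏ _i ∈ Finset.range τ, r :=
        Finset.prod_le_prod (fun _ _ => abs_nonneg _) fun i _ => h (t - i) (by omega)
    _ = r ^ τ := by rw [Finset.prod_const, Finset.card_range]

theorem summable_ageTail_of_abs_le {r : ℝ} (hr : r < 1) (h : ∀ s ≤ t, |1 - μ s| ≤ r) :
    Summable (ageTail μ t) :=
  have hr₀ : 0 ≤ r := (abs_nonneg _).trans (h t le_rfl)
  .of_norm_bounded (summable_geometric_of_lt_one hr₀ hr) (abs_ageTail_le_pow h)

theorem summable_ageTail_of_mem_Icc {c : ℝ} (hc : 0 < c) (h : ∀ s ≤ t, μ s ∈ Set.Icc c 1) :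
    Summable (ageTail μ t) :=
  summable_ageTail_of_abs_le (sub_lt_self 1 hc) fun s hs => by
    rw [abs_of_nonneg (sub_nonneg.mpr (h s hs).2)]
    exact sub_le_sub_left (h s hs).1 1

theorem summable_ageTail_add_one (h : Summable (ageTail μ t)) :
    Summable (ageTail μ (t + 1)) := by
  rw [← summable_nat_add_iff 1]
  simpa only [ageTail_add_one_succ] using h.mul_left (1 - μ (t + 1))

theorem aoi_add_one (h : Summable (ageTail μ t)) :
    aoi μ (t + 1) = 1 + (1 - μ (t + 1)) * aoi μ t :=
  calc aoi μ (t + 1)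
      = ageTail μ (t + 1) 0 + ∑' τ, ageTail μ (t + 1) (τ + 1) :=
        (summable_ageTail_add_one h).tsum_eq_zero_add
    _ = 1 + (1 - μ (t + 1)) * ∑' τ, ageTail μ t τ := by
        simp only [ageTail_zero, ageTail_add_one_succ, tsum_mul_left]
    _ = 1 + (1 - μ (t + 1)) * aoi μ t := rfl

theorem summable_ageTail_add_natCast (h : Summable (ageTail μ t)) (n : ℕ) :
    Summable (ageTail μ (t + n)) := by
  induction n with
  | zero => simpa only [Nat.cast_zero, add_zero] using h
  | succ n ih => simpa only [Nat.cast_succ, add_assoc] using summable_ageTail_add_one ih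

theorem aoi_sub_aoi_add_natCast (hμ : Summable (ageTail μ t)) (hμ' : Summable (ageTail μ' t))
    (n : ℕ) (heq : ∀ i < n, μ (t + i + 1) = μ' (t + i + 1)) :
    aoi μ (t + n) - aoi μ' (t + n) =
      (∏ i ∈ Finset.range n, (1 - μ (t + i + 1))) * (aoi μ t - aoi μ' t) := by
  induction n with
  | zero => simp only [Nat.cast_zero, add_zero, Finset.prod_range_zero, one_mul]
  | succ n ih =>
    have ih := ih fun i hi => heq i (by omega)
    rw [Nat.cast_succ, ← add_assoc, aoi_add_one (summable_ageTail_add_natCast hμ n),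
      aoi_add_one (summable_ageTail_add_natCast hμ' n), ← heq n n.lt_succ_self,
      Finset.prod_range_succ]
    linear_combination (1 - μ (t + n + 1)) * ih

end AgeOfInformation

section Schedules

variable {μmin μstar : ℝ} {ν : ℤ → ℝ} {k k2 : ℕ} {s : ℤ}

theorem caseI_of_le (hs : s ≤ k) : caseI μmin μstar ν k k2 s = ν s :=
  if_pos hs

theorem caseII_of_le (hs : s ≤ k) : caseII μmin μstar ν k k2 s = ν s :=
  if_pos hs

theorem caseI_add_one : caseI μmin μstar ν k k2 (k + 1) = μstar := by
  rw [caseI, if_neg (by omega), if_pos rfl]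

theorem caseI_of_lt_of_le (hks : (k : ℤ) + 1 < s) (hs : s ≤ k + k2 + 1) :
    caseI μmin μstar ν k k2 s = μmin := by
  rw [caseI, if_neg (by omega), if_neg (by omega), if_pos hs]

theorem caseII_of_lt_of_le (hks : (k : ℤ) < s) (hs : s ≤ k + k2) :
    caseII μmin μstar ν k k2 s = μmin := by
  rw [caseII, if_neg (by omega), if_pos hs]

theorem summable_ageTail_caseI (hν : Summable (ageTail ν k)) :
    Summable (ageTail (caseI μmin μstar ν k k2) k) := by
  rwa [ageTail_congr fun _ => caseI_of_le]

theorem summable_ageTail_caseII (hν : Summable (ageTail ν k)) :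
    Summable (ageTail (caseII μmin μstar ν k k2) k) := by
  rwa [ageTail_congr fun _ => caseII_of_le]

theorem aoi_caseI_add_one (hν : Summable (ageTail ν k)) :
    aoi (caseI μmin μstar ν k k2) (k + 1) = 1 + (1 - μstar) * aoi ν k := by
  rw [aoi_add_one (summable_ageTail_caseI hν), caseI_add_one, aoi_congr fun _ => caseI_of_le]

theorem aoi_caseII_add_one (hν : Summable (ageTail ν k)) (hk2 : 1 ≤ k2) :
    aoi (caseII μmin μstar ν k k2) (k + 1) = 1 + (1 - μmin) * aoi ν k := by
  rw [aoi_add_one (summable_ageTail_caseII hν), caseII_of_lt_of_le (by omega) (by omega),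
    aoi_congr fun _ => caseII_of_le]

theorem aoi_caseI_sub_aoi_caseII (hν : Summable (ageTail ν k)) {n : ℕ} (hn : n < k2) :
    aoi (caseI μmin μstar ν k k2) (k + 1 + n) - aoi (caseII μmin μstar ν k k2) (k + 1 + n) =
      (1 - μmin) ^ n * (μmin - μstar) * aoi ν k := by
  have hI : ∀ i < n, caseI μmin μstar ν k k2 (k + 1 + i + 1) = μmin :=
    fun i hi => caseI_of_lt_of_le (by omega) (by omega)
  have hII : ∀ i < n, caseII μmin μstar ν k k2 (k + 1 + i + 1) = μmin :=
    fun i hi => caseII_of_lt_of_le (by omega) (by omega)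
  have hprod : ∏ i ∈ Finset.range n, (1 - caseI μmin μstar ν k k2 (k + 1 + i + 1)) =
      (1 - μmin) ^ n :=
    (Finset.prod_eq_pow_card fun i hi => by rw [hI i (Finset.mem_range.mp hi)]).trans
      (by rw [Finset.card_range])
  rw [aoi_sub_aoi_add_natCast (summable_ageTail_add_one (summable_ageTail_caseI hν))
      (summable_ageTail_add_one (summable_ageTail_caseII hν)) n
      fun i hi => (hI i hi).trans (hII i hi).symm,
    hprod, aoi_caseI_add_one hν, aoi_caseII_add_one hν (by omega)]
  ring

end Schedules

theorem stmt_6_general (μmin μstar : ℝ) (k k1 k2 : ℕ) (ν : ℤ → ℝ) (hν : Summable (ageTail ν k))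
    (m : ℕ) (hm₁ : k1 + 1 ≤ m) (hm₂ : m ≤ k1 + k2) :
    aoi (caseI μmin μstar ν k k2) ((k : ℤ) + k1 + k2 + 1 - m) -
        aoi (caseII μmin μstar ν k k2) ((k : ℤ) + k1 + k2 + 1 - m) =
      (1 - μmin) ^ (k1 + k2 - m) * (μmin - μstar) * aoi ν k := by
  have hslot : (k : ℤ) + k1 + k2 + 1 - m = k + 1 + (k1 + k2 - m : ℕ) := by omega
  rw [hslot]
  exact aoi_caseI_sub_aoi_caseII hν (by omega)

/-- (Equation (11) in the proof of Lemma 4.) With `μ_I`, `μ_II` the Case I and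
Case II schedules built from `k ≥ 0`, `k1 ≥ 0`, `k2 ≥ 1` and a common schedule
`ν`, and `T = k + k1 + k2 + 1`: for every `m` with `k1+1 ≤ m ≤ k1+k2`,
`A_{μ_I}(T−m) − A_{μ_II}(T−m) = (1−μ_min)^{k1+k2−m} (μ_min − μ*) A_ν(k)`,
where `A_ν(k)` is the expected AoI at slot `k` under the common prefix `ν`. -/
theorem stmt_6 (μmin μstar : ℝ) (hμmin_pos : 0 < μmin) (hμ_le : μmin ≤ μstar)
    (hμstar_le : μstar ≤ 1) (k k1 k2 : ℕ) (hk2 : 1 ≤ k2)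
    (ν : ℤ → ℝ) (hν : ∀ s : ℤ, μmin ≤ ν s ∧ ν s ≤ μstar)
    (m : ℕ) (hm₁ : k1 + 1 ≤ m) (hm₂ : m ≤ k1 + k2) :
    aoi (caseI μmin μstar ν k k2) ((k : ℤ) + k1 + k2 + 1 - m) -
        aoi (caseII μmin μstar ν k k2) ((k : ℤ) + k1 + k2 + 1 - m) =
      (1 - μmin) ^ (k1 + k2 - m) * (μmin - μstar) * aoi ν k := by
  exact stmt_6_general μmin μstar k k1 k2 ν (summable_ageTail_of_mem_Icc hμmin_pos fun s _ =>
    ⟨(hν s).1, (hν s).2.trans hμstar_le⟩) m hm₁ hm₂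
end

section
/- (Lemma 6 of the paper, deterministic-schedule form.) Fix reals μ_min and μ* with 0 < μ_min ≤ μ* ≤ 1, let μ : ℤ → ℝ be a schedule (μ_min ≤ μ(s) ≤ μ* for all s), let T ≥ 1 be an integer, and let n = #{t ∈ {1, …, T} : μ(t) ≠ μ*} be the number of slots in {1, …, T} in which a sub-optimal channel is used. Then ∑_{t=1}^{T} A_μ(t) ≤ T/μ* + (1−μ*)/(μ* μ_min) + (1/μ_min − 1/μ*) · n. -/
/-!
Conditioning on the update of slot `t` gives `A_μ(t) = 1 + (1 - μ(t)) A_μ(t-1)`. Rewriting this,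
for any `p`, as `p A_μ(t) = 1 + (1 - p) (A_μ(t-1) - A_μ(t)) + (p - μ(t)) A_μ(t-1)` and summing over
`t`, the middle terms telescope to at most `(1 - p) A_μ(0)`, and `(p - μ(t)) A_μ(t-1)` is positive
only in slots with `μ(t) < p`. Both contributions are controlled by `0 ≤ A_μ ≤ 1 / m`, where
`m > 0` is a lower bound for `μ`.
-/

/-- The probability that no update succeeds in the `k` time-slots `t, t - 1, …, t - k + 1`, i.e.
that the age of information at time-slot `t` exceeds `k`. These are the terms of the series
`aoi μ t`. -/
noncomputable def noSuccessProb (μ : ℤ → ℝ) (t : ℤ) (k : ℕ) : ℝ :=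
  ∏ i ∈ Finset.range k, (1 - μ (t - (i : ℤ)))

section NoSuccessProb

variable {μ : ℤ → ℝ} {m : ℝ}

lemma noSuccessProb_zero (μ : ℤ → ℝ) (t : ℤ) : noSuccessProb μ t 0 = 1 :=
  Finset.prod_range_zero _

lemma noSuccessProb_succ (μ : ℤ → ℝ) (t : ℤ) (k : ℕ) :
    noSuccessProb μ t (k + 1) = (1 - μ t) * noSuccessProb μ (t - 1) k := by
  simp only [noSuccessProb, Finset.prod_range_succ', Nat.cast_succ, Nat.cast_zero, sub_zero,
    sub_add_eq_sub_sub_swap, mul_comm]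

lemma noSuccessProb_nonneg (hμ : ∀ s, μ s ≤ 1) (t : ℤ) (k : ℕ) : 0 ≤ noSuccessProb μ t k :=
  Finset.prod_nonneg fun _ _ ↦ sub_nonneg.2 (hμ _)

lemma noSuccessProb_le_pow (hμ : ∀ s, μ s ∈ Set.Icc m 1) (t : ℤ) (k : ℕ) :
    noSuccessProb μ t k ≤ (1 - m) ^ k :=
  calc
    noSuccessProb μ t k ≤ ∏ _i ∈ Finset.range k, (1 - m) :=
      Finset.prod_le_prod (fun _ _ ↦ sub_nonneg.2 (hμ _).2) fun _ _ ↦ sub_le_sub_left (hμ _).1 1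
    _ = (1 - m) ^ k := by rw [Finset.prod_const, Finset.card_range]

lemma hasSum_one_sub_pow (hm : 0 < m) (hm2 : m < 2) : HasSum (fun k : ℕ ↦ (1 - m) ^ k) m⁻¹ := by
  have abs_lt_one : |1 - m| < 1 := abs_lt.2 ⟨by linarith, by linarith⟩
  simpa only [sub_sub_cancel] using hasSum_geometric_of_abs_lt_one abs_lt_one

lemma summable_noSuccessProb (hm : 0 < m) (hμ : ∀ s, μ s ∈ Set.Icc m 1) (t : ℤ) :
    Summable (noSuccessProb μ t) :=
  .of_nonneg_of_le (noSuccessProb_nonneg (fun s ↦ (hμ s).2) t) (noSuccessProb_le_pow hμ t)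
    (hasSum_one_sub_pow hm (((hμ t).1.trans (hμ t).2).trans_lt one_lt_two)).summable

end NoSuccessProb

section Aoi

variable {μ : ℤ → ℝ} {m : ℝ}

lemma aoi_eq_tsum_noSuccessProb (μ : ℤ → ℝ) (t : ℤ) : aoi μ t = ∑' k, noSuccessProb μ t k :=
  rfl

lemma aoi_nonneg (hμ : ∀ s, μ s ≤ 1) (t : ℤ) : 0 ≤ aoi μ t :=
  tsum_nonneg (noSuccessProb_nonneg hμ t)

lemma aoi_le_inv (hm : 0 < m) (hμ : ∀ s, μ s ∈ Set.Icc m 1) (t : ℤ) : aoi μ t ≤ m⁻¹ :=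
  hasSum_le (noSuccessProb_le_pow hμ t) (summable_noSuccessProb hm hμ t).hasSum
    (hasSum_one_sub_pow hm (((hμ t).1.trans (hμ t).2).trans_lt one_lt_two))

lemma aoi_eq_one_add {t : ℤ} (h : Summable (noSuccessProb μ t)) :
    aoi μ t = 1 + (1 - μ t) * aoi μ (t - 1) := by
  simp only [aoi_eq_tsum_noSuccessProb, h.tsum_eq_zero_add, noSuccessProb_zero,
    noSuccessProb_succ, tsum_mul_left]

end Aoi

lemma sum_Icc_one_sub_telescope {G : Type*} [AddCommGroup G] (f : ℤ → G) (T : ℕ) :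
    ∑ t ∈ Finset.Icc (1 : ℤ) T, (f (t - 1) - f t) = f 0 - f T := by
  induction T with
  | zero => simp
  | succ T ih =>
    rw [Nat.cast_succ, ← Finset.insert_Icc_right_eq_Icc_add_one (by omega),
      Finset.sum_insert (by simp), ih, add_sub_cancel_right, add_comm, sub_add_sub_cancel]

lemma mul_sum_Icc_eq_of_recurrence {R : Type*} [CommRing R] {a μ : ℤ → R} {T : ℕ}
    (h : ∀ t ∈ Finset.Icc (1 : ℤ) T, a t = 1 + (1 - μ t) * a (t - 1)) (p : R) :
    p * ∑ t ∈ Finset.Icc (1 : ℤ) T, a t =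
      T + (1 - p) * (a 0 - a T) + ∑ t ∈ Finset.Icc (1 : ℤ) T, (p - μ t) * a (t - 1) := by
  have slot_identity : ∀ t ∈ Finset.Icc (1 : ℤ) T,
      p * a t = 1 + (1 - p) * (a (t - 1) - a t) + (p - μ t) * a (t - 1) := fun t ht ↦ by
    linear_combination h t ht
  rw [Finset.mul_sum, Finset.sum_congr rfl slot_identity, Finset.sum_add_distrib,
    Finset.sum_add_distrib, ← Finset.mul_sum, sum_Icc_one_sub_telescope]
  simp

lemma sum_sub_mul_le_card_mul {ι R : Type*} [Ring R] [LinearOrder R] [IsOrderedRing R]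
    (s : Finset ι) {f b : ι → R} {m p B : R} (hf : ∀ i ∈ s, m ≤ f i)
    (hb : ∀ i ∈ s, b i ∈ Set.Icc 0 B) :
    ∑ i ∈ s, (p - f i) * b i ≤ (s.filter (f · < p)).card * ((p - m) * B) := by
  have term_le : ∀ i ∈ s, (p - f i) * b i ≤ if f i < p then (p - m) * B else 0 := fun i hi ↦ by
    split_ifs with hlt
    · exact mul_le_mul (sub_le_sub_left (hf i hi) p) (hb i hi).2 (hb i hi).1
        (sub_nonneg.2 ((hf i hi).trans hlt.le))
    · exact mul_nonpos_of_nonpos_of_nonneg (sub_nonpos.2 (not_lt.1 hlt)) (hb i hi).1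
  calc
    ∑ i ∈ s, (p - f i) * b i ≤ ∑ i ∈ s, if f i < p then (p - m) * B else 0 :=
      Finset.sum_le_sum term_le
    _ = (s.filter (f · < p)).card * ((p - m) * B) := by
      rw [← Finset.sum_filter, Finset.sum_const, nsmul_eq_mul]

theorem stmt_11_general {μ : ℤ → ℝ} {m p : ℝ} (hm : 0 < m) (hμ : ∀ s, μ s ∈ Set.Icc m 1)
    (hp : 0 < p) (hp1 : p ≤ 1) (T : ℕ) :
    ∑ t ∈ Finset.Icc (1 : ℤ) T, aoi μ t ≤
      T / p + (1 - p) / (p * m) +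
        (1 / m - 1 / p) * ((Finset.Icc (1 : ℤ) T).filter (μ · < p)).card := by
  have aoi_mem (t : ℤ) : aoi μ t ∈ Set.Icc 0 m⁻¹ :=
    ⟨aoi_nonneg (fun s ↦ (hμ s).2) t, aoi_le_inv hm hμ t⟩
  have sum_identity := mul_sum_Icc_eq_of_recurrence (T := T)
    (fun t _ ↦ aoi_eq_one_add (summable_noSuccessProb hm hμ t)) p
  have boundary_le : (1 - p) * (aoi μ 0 - aoi μ T) ≤ (1 - p) * m⁻¹ :=
    mul_le_mul_of_nonneg_left ((sub_le_self _ (aoi_mem T).1).trans (aoi_mem 0).2)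
      (sub_nonneg.2 hp1)
  have suboptimal_le := sum_sub_mul_le_card_mul (Finset.Icc (1 : ℤ) T) (p := p)
    (fun t _ ↦ (hμ t).1) (fun t _ ↦ aoi_mem (t - 1))
  set n := ((Finset.Icc (1 : ℤ) T).filter (μ · < p)).card
  calc
    ∑ t ∈ Finset.Icc (1 : ℤ) T, aoi μ t ≤ (T + (1 - p) * m⁻¹ + n * ((p - m) * m⁻¹)) / p := by
      rw [le_div_iff₀' hp]
      linarith
    _ = T / p + (1 - p) / (p * m) + (1 / m - 1 / p) * n := by
      field_simp

/-- (Lemma 6, deterministic-schedule form.) Fix `0 < μ_min ≤ μ* ≤ 1`, let `μ`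
be a schedule, `T ≥ 1`, and let `n` be the number of slots in `{1,…,T}` in
which a sub-optimal channel is used. Then
`∑_{t=1}^{T} A_μ(t) ≤ T/μ* + (1−μ*)/(μ* μ_min) + (1/μ_min − 1/μ*) n`. -/
theorem stmt_11 (μmin μstar : ℝ) (hμmin_pos : 0 < μmin) (hμ_le : μmin ≤ μstar)
    (hμstar_le : μstar ≤ 1)
    (μ : ℤ → ℝ) (hμ : ∀ s : ℤ, μmin ≤ μ s ∧ μ s ≤ μstar)
    (T : ℕ) (hT : 1 ≤ T)
    (n : ℕ) (hn : n = ((Finset.Icc (1 : ℤ) (T : ℤ)).filter (fun t => μ t ≠ μstar)).card) :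
    ∑ t ∈ Finset.Icc (1 : ℤ) (T : ℤ), aoi μ t ≤
      (T : ℝ) / μstar + (1 - μstar) / (μstar * μmin) + (1 / μmin - 1 / μstar) * n := by
  simpa only [hn, fun t ↦ (hμ t).2.lt_iff_ne] using
    stmt_11_general hμmin_pos (fun s ↦ ⟨(hμ s).1, (hμ s).2.trans hμstar_le⟩)
      (hμmin_pos.trans_le hμ_le) hμstar_le T
end

section
/- (Equation 'age_in_the_good_case' in the proof of Lemma 6 for Q-policies.) Fix reals μ_min and μ* with 0 < μ_min ≤ μ* ≤ 1, let μ : ℤ → ℝ be a schedule (μ_min ≤ μ(s) ≤ μ* for all s), let L ≥ 0 be an integer, and let t ∈ ℤ. If μ(s) = μ* for all s with t−L+1 ≤ s ≤ t, then A_μ(t) ≤ 1/μ* + (1−μ*)^{L}/μ_min. -/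
/-!
`A_μ(t)` is the sum over `k` of the probability that the `k` most recent slots all failed. Splitting
the series after `L` terms gives the renewal identity
`A_μ(t) = ∑_{k < L} P(k failures up to t) + P(L failures up to t) · A_μ(t - L)`.
Success probabilities at least `p` on the last `L` slots bound the first part by a truncated
geometric series of ratio `1 - p` and the factor of `A_μ(t - L)` by `(1 - p)^L`; success
probabilities at least `m` before that bound `A_μ(t - L)` by the full geometric series, `1 / m`.
-/

/-- The probability that the `k` slots `t, t - 1, …, t - k + 1` all fail, when slot `s` succeeds
independently with probability `μ s`. These are the terms of the series `aoi μ t`. -/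
noncomputable def failureProb (μ : ℤ → ℝ) (t : ℤ) (k : ℕ) : ℝ :=
  ∏ i ∈ Finset.range k, (1 - μ (t - (i : ℤ)))

section Schedule

variable {μ : ℤ → ℝ} {t : ℤ} {m p : ℝ}

theorem failureProb_nonneg {k : ℕ} (hμ : ∀ s ∈ Set.Ioc (t - k) t, μ s ≤ 1) :
    0 ≤ failureProb μ t k := by
  refine Finset.prod_nonneg fun i hi ↦ sub_nonneg.2 (hμ _ ?_)
  rw [Finset.mem_range] at hi
  constructor <;> omega

theorem failureProb_le_pow {k : ℕ} (hμ : ∀ s ∈ Set.Ioc (t - k) t, μ s ∈ Set.Icc p 1) :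
    failureProb μ t k ≤ (1 - p) ^ k := by
  have hmem (i : ℕ) (hi : i ∈ Finset.range k) : t - (i : ℤ) ∈ Set.Ioc (t - k) t := by
    rw [Finset.mem_range] at hi
    constructor <;> omega
  calc failureProb μ t k ≤ ∏ _i ∈ Finset.range k, (1 - p) :=
        Finset.prod_le_prod (fun i hi ↦ sub_nonneg.2 (hμ _ (hmem i hi)).2)
          fun i hi ↦ sub_le_sub_left (hμ _ (hmem i hi)).1 1
    _ = (1 - p) ^ k := by rw [Finset.prod_const, Finset.card_range]

theorem failureProb_add (μ : ℤ → ℝ) (t : ℤ) (L k : ℕ) :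
    failureProb μ t (L + k) = failureProb μ t L * failureProb μ (t - L) k := by
  simp only [failureProb, Finset.prod_range_add, Nat.cast_add, sub_sub]

theorem summable_failureProb (hm : 0 < m) (hμ : ∀ s ≤ t, μ s ∈ Set.Icc m 1) :
    Summable (failureProb μ t) := by
  have hm_le : m ≤ 1 := (hμ t le_rfl).1.trans (hμ t le_rfl).2
  exact .of_nonneg_of_le (fun k ↦ failureProb_nonneg fun s hs ↦ (hμ s hs.2).2)
    (fun k ↦ failureProb_le_pow fun s hs ↦ hμ s hs.2)
    (summable_geometric_of_lt_one (sub_nonneg.2 hm_le) (sub_lt_self 1 hm))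

theorem aoi_le_one_div (hm : 0 < m) (hμ : ∀ s ≤ t, μ s ∈ Set.Icc m 1) : aoi μ t ≤ 1 / m := by
  have hm_le : m ≤ 1 := (hμ t le_rfl).1.trans (hμ t le_rfl).2
  have hgeom : HasSum (fun k : ℕ ↦ (1 - m) ^ k) (1 / m) := by
    simpa only [sub_sub_cancel, one_div] using
      hasSum_geometric_of_lt_one (sub_nonneg.2 hm_le) (sub_lt_self 1 hm)
  exact hasSum_le (fun k ↦ failureProb_le_pow fun s hs ↦ hμ s hs.2)
    (summable_failureProb hm hμ).hasSum hgeom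

theorem aoi_eq_sum_add_failureProb_mul_aoi {L : ℕ} (h : Summable (failureProb μ (t - L))) :
    aoi μ t =
      ∑ k ∈ Finset.range L, failureProb μ t k + failureProb μ t L * aoi μ (t - L) := by
  have htail (k : ℕ) :
      failureProb μ t (k + L) = failureProb μ t L * failureProb μ (t - L) k := by
    rw [add_comm, failureProb_add]
  have hsum : Summable (failureProb μ t) :=
    (summable_nat_add_iff L).1 <| by simpa only [htail] using h.mul_left (failureProb μ t L)
  calc aoi μ t = ∑ k ∈ Finset.range L, failureProb μ t k + ∑' k, failureProb μ t (k + L) :=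
        (hsum.sum_add_tsum_nat_add L).symm
    _ = ∑ k ∈ Finset.range L, failureProb μ t k + failureProb μ t L * aoi μ (t - L) := by
        simp only [htail, tsum_mul_left]
        rfl

theorem sum_failureProb_le {L : ℕ} (hp : p ≠ 0)
    (hμ : ∀ s ∈ Set.Ioc (t - L) t, μ s ∈ Set.Icc p 1) :
    ∑ k ∈ Finset.range L, failureProb μ t k ≤ (1 - (1 - p) ^ L) / p := by
  calc ∑ k ∈ Finset.range L, failureProb μ t k ≤ ∑ k ∈ Finset.range L, (1 - p) ^ k := by
        refine Finset.sum_le_sum fun k hk ↦ failureProb_le_pow fun s hs ↦ hμ s ⟨?_, hs.2⟩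
        have hkL := Finset.mem_range.1 hk
        have hks := hs.1
        omega
    _ = (1 - (1 - p) ^ L) / p := by
        rw [eq_div_iff hp]
        simpa only [sub_sub_cancel] using geom_sum_mul_neg (1 - p) L

end Schedule

theorem stmt_12_general {μ : ℤ → ℝ} {t : ℤ} {L : ℕ} {m p : ℝ} (hm : 0 < m) (hp : p ≠ 0)
    (hold : ∀ s ≤ t - L, μ s ∈ Set.Icc m 1)
    (hrecent : ∀ s ∈ Set.Ioc (t - L) t, μ s ∈ Set.Icc p 1) :
    aoi μ t ≤ (1 - (1 - p) ^ L) / p + (1 - p) ^ L / m := by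
  have hfail_nonneg : 0 ≤ failureProb μ t L := failureProb_nonneg fun s hs ↦ (hrecent s hs).2
  calc aoi μ t =
        ∑ k ∈ Finset.range L, failureProb μ t k + failureProb μ t L * aoi μ (t - L) :=
        aoi_eq_sum_add_failureProb_mul_aoi (summable_failureProb hm hold)
    _ ≤ (1 - (1 - p) ^ L) / p + failureProb μ t L * (1 / m) := by
        gcongr
        · exact sum_failureProb_le hp hrecent
        · exact aoi_le_one_div hm hold
    _ ≤ (1 - (1 - p) ^ L) / p + (1 - p) ^ L / m := by
        rw [mul_one_div]
        gcongr
        exact failureProb_le_pow hrecent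

/-- ('age_in_the_good_case' in the proof of Lemma 6 for Q-policies.)
Fix `0 < μ_min ≤ μ* ≤ 1`, let `μ` be a schedule, `L ≥ 0` an integer, `t ∈ ℤ`.
If `μ(s) = μ*` for all `s` with `t−L+1 ≤ s ≤ t`, then
`A_μ(t) ≤ 1/μ* + (1−μ*)^L/μ_min`. -/
theorem stmt_12 (μmin μstar : ℝ) (hμmin_pos : 0 < μmin) (hμ_le : μmin ≤ μstar)
    (hμstar_le : μstar ≤ 1)
    (μ : ℤ → ℝ) (hμ : ∀ s : ℤ, μmin ≤ μ s ∧ μ s ≤ μstar)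
    (L : ℕ) (t : ℤ)
    (hopt : ∀ s : ℤ, t - (L : ℤ) + 1 ≤ s → s ≤ t → μ s = μstar) :
    aoi μ t ≤ 1 / μstar + (1 - μstar) ^ L / μmin := by
  have hμstar_pos : 0 < μstar := hμmin_pos.trans_le hμ_le
  have hpow_nonneg : 0 ≤ (1 - μstar) ^ L := pow_nonneg (sub_nonneg.2 hμstar_le) L
  calc aoi μ t ≤ (1 - (1 - μstar) ^ L) / μstar + (1 - μstar) ^ L / μmin :=
        stmt_12_general hμmin_pos hμstar_pos.ne'
          (fun s _ ↦ ⟨(hμ s).1, (hμ s).2.trans hμstar_le⟩)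
          fun s hs ↦ ⟨(hopt s hs.1 hs.2).ge, (hμ s).2.trans hμstar_le⟩
    _ ≤ 1 / μstar + (1 - μstar) ^ L / μmin := by
        gcongr
        exact sub_le_self 1 hpow_nonneg
end
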